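/- Let α and α' be positive rational numbers and let f : 𝔤_α → 𝔤_{α'} be any isomorphism of Lie algebras, where {e_i} and {e'_i} denote the respective distinguished bases. Then f maps span{e₈} onto span{e'₈}, maps span{e₆,e₇,e₈} onto span{e'₆,e'₇,e'₈}, maps span{e₃,e₄,e₅,e₆,e₇,e₈} onto span{e'₃,e'₄,e'₅,e'₆,e'₇,e'₈}, and maps span{e₅,e₆,e₇,e₈} onto span{e'₅,e'₆,e'₇,e'₈}. Equivalently, the dual map f* satisfies f*(e'^i) ∈ span{e¹,e²} for i = 1,2; f*(e'^i) ∈ span{e¹,e²,e³,e⁴} for i = 3,4; f*(e'^5) ∈ span{e¹,…,e⁵}; and f*(e'^i) ∈ span{e¹,…,e⁷} for i = 6,7. -/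

import Mathlib

/-! The four subspaces are invariants of the Lie algebra: `span {e 7}` is the centre,
`span {e 5, e 6, e 7}` and `span {e 2, ..., e 7}` are the second and third terms of the ascending
central series, and `span {e 4, ..., e 7}` is the derived subalgebra. The first three facts are
`mem_center_iff`, `mem_center_two_iff` and `mem_center_three_iff`, read off from the coordinate
formula `gBr_apply` by bracketing with `e 0` and `e 1`, using only `1 + a ≠ 0`; the last one is
`span_brackets`. An isomorphism preserves all four, since membership in each is expressed by
brackets alone. -/

noncomputable section

/-- Structure constants of the Lie algebra `g_alpha` (0-indexed basis `e 0, ..., e 7`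
corresponding to `e_1, ..., e_8` in the paper): `gA alpha i j` is the value of the bracket
`[e_i, e_j]` for the listed pairs with `i < j`, and `0` otherwise. -/
def gA (a : ℝ) (i j : Fin 8) : Fin 8 → ℝ :=
  if i = 0 ∧ j = 1 then -(Pi.single 4 1 : Fin 8 → ℝ)
  else if i = 0 ∧ j = 4 then -(Pi.single 5 1 : Fin 8 → ℝ)
  else if i = 1 ∧ j = 3 then (a - 1) • (Pi.single 5 1 : Fin 8 → ℝ)
  else if i = 0 ∧ j = 3 then (1 + a) • (Pi.single 6 1 : Fin 8 → ℝ)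
  else if i = 1 ∧ j = 2 then (Pi.single 6 1 : Fin 8 → ℝ)
  else if i = 1 ∧ j = 4 then -((1 + a) • (Pi.single 6 1 : Fin 8 → ℝ))
  else if i = 0 ∧ j = 5 then -(Pi.single 7 1 : Fin 8 → ℝ)
  else if i = 1 ∧ j = 6 then -(Pi.single 7 1 : Fin 8 → ℝ)
  else if i = 2 ∧ j = 3 then -(Pi.single 7 1 : Fin 8 → ℝ)
  else if i = 3 ∧ j = 4 then (2 : ℝ) • (Pi.single 7 1 : Fin 8 → ℝ)
  else 0

/-- The skew-symmetric bilinear bracket of `g_alpha`, extended bilinearly from the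
structure constants. -/
def gBr (a : ℝ) (x y : Fin 8 → ℝ) : Fin 8 → ℝ :=
  ∑ i : Fin 8, ∑ j : Fin 8, (x i * y j) • (gA a i j - gA a j i)

/-- The distinguished basis vectors `e i = e_{i+1}`. -/
def e (i : Fin 8) : Fin 8 → ℝ := Pi.single i 1

lemma gBr_apply (a : ℝ) (x y : Fin 8 → ℝ) :
    gBr a x y = ![0, 0, 0, 0,
      -(x 0 * y 1 - x 1 * y 0),
      -(x 0 * y 4 - x 4 * y 0) + (a - 1) * (x 1 * y 3 - x 3 * y 1),
      (1 + a) * (x 0 * y 3 - x 3 * y 0) + (x 1 * y 2 - x 2 * y 1)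
        - (1 + a) * (x 1 * y 4 - x 4 * y 1),
      -(x 0 * y 5 - x 5 * y 0) - (x 1 * y 6 - x 6 * y 1) - (x 2 * y 3 - x 3 * y 2)
        + 2 * (x 3 * y 4 - x 4 * y 3)] := by
  funext k
  simp only [gBr, Fin.sum_univ_eight, gA, Fin.reduceEq, and_true, and_false, if_true,
    if_false, true_and, false_and, sub_zero, zero_sub, smul_zero, add_zero, sub_self]
  fin_cases k <;> simp <;> ring

lemma mem_span_one (x : Fin 8 → ℝ) : x ∈ Submodule.span ℝ {e 7} ↔
    x 0 = 0 ∧ x 1 = 0 ∧ x 2 = 0 ∧ x 3 = 0 ∧ x 4 = 0 ∧ x 5 = 0 ∧ x 6 = 0 := by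
  rw [Submodule.mem_span_singleton]
  constructor
  · rintro ⟨c, rfl⟩
    simp [e]
  · rintro ⟨h0, h1, h2, h3, h4, h5, h6⟩
    refine ⟨x 7, ?_⟩
    funext k
    fin_cases k <;> simp [e, *]

lemma mem_span_three (x : Fin 8 → ℝ) : x ∈ Submodule.span ℝ {e 5, e 6, e 7} ↔
    x 0 = 0 ∧ x 1 = 0 ∧ x 2 = 0 ∧ x 3 = 0 ∧ x 4 = 0 := by
  simp only [Submodule.mem_span_insert, Submodule.mem_span_singleton]
  constructor
  · rintro ⟨c, _, ⟨d, _, ⟨b, rfl⟩, rfl⟩, rfl⟩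
    simp [e]
  · rintro ⟨h0, h1, h2, h3, h4⟩
    refine ⟨x 5, _, ⟨x 6, _, ⟨x 7, rfl⟩, rfl⟩, ?_⟩
    funext k
    fin_cases k <;> simp [e, *]

lemma mem_span_four (x : Fin 8 → ℝ) : x ∈ Submodule.span ℝ {e 4, e 5, e 6, e 7} ↔
    x 0 = 0 ∧ x 1 = 0 ∧ x 2 = 0 ∧ x 3 = 0 := by
  rw [Submodule.mem_span_insert]
  simp only [mem_span_three]
  constructor
  · rintro ⟨c, z, ⟨h0, h1, h2, h3, h4⟩, rfl⟩
    simp [e, *]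
  · rintro ⟨h0, h1, h2, h3⟩
    refine ⟨x 4, x - x 4 • e 4, ?_, by simp⟩
    simp [e, *]

lemma mem_span_six (x : Fin 8 → ℝ) :
    x ∈ Submodule.span ℝ {e 2, e 3, e 4, e 5, e 6, e 7} ↔ x 0 = 0 ∧ x 1 = 0 := by
  rw [Submodule.mem_span_insert]
  simp only [Submodule.mem_span_insert (y := e 3), mem_span_four]
  constructor
  · rintro ⟨c, _, ⟨d, z, ⟨h0, h1, h2, h3⟩, rfl⟩, rfl⟩
    simp [e, *]
  · rintro ⟨h0, h1⟩
    refine ⟨x 2, _, ⟨x 3, x - x 2 • e 2 - x 3 • e 3, ?_, rfl⟩, by simp⟩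
    simp [e, *]

/-- `span {e 7}` is the centre of `g_a`. -/
lemma mem_center_iff {a : ℝ} (ha : 0 < a) (x : Fin 8 → ℝ) :
    x ∈ Submodule.span ℝ {e 7} ↔ ∀ y, gBr a x y = 0 := by
  have ha' : 1 + a ≠ 0 := by positivity
  rw [mem_span_one]
  constructor
  · rintro ⟨h0, h1, h2, h3, h4, h5, h6⟩ y
    funext k
    rw [gBr_apply]
    fin_cases k <;> simp [*]
  · intro h
    have hb0 := h (e 0)
    have hb1 := h (e 1)
    simp [gBr_apply, e, ha', Matrix.cons_eq_zero_iff] at hb0 hb1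
    simp_all

/-- `span {e 5, e 6, e 7}` is the second term of the ascending central series of `g_a`. -/
lemma mem_center_two_iff {a : ℝ} (ha : 0 < a) (x : Fin 8 → ℝ) :
    x ∈ Submodule.span ℝ {e 5, e 6, e 7} ↔ ∀ y, gBr a x y ∈ Submodule.span ℝ {e 7} := by
  have ha' : 1 + a ≠ 0 := by positivity
  simp only [mem_span_one, mem_span_three]
  constructor
  · rintro ⟨h0, h1, h2, h3, h4⟩ y
    simp [gBr_apply, *]
  · intro h
    have hb0 := h (e 0)
    have hb1 := h (e 1)
    simp [gBr_apply, e, ha'] at hb0 hb1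
    simp_all

/-- `span {e 2, ..., e 7}` is the third term of the ascending central series of `g_a`. -/
lemma mem_center_three_iff (a : ℝ) (x : Fin 8 → ℝ) :
    x ∈ Submodule.span ℝ {e 2, e 3, e 4, e 5, e 6, e 7} ↔
      ∀ y, gBr a x y ∈ Submodule.span ℝ {e 5, e 6, e 7} := by
  simp only [mem_span_six, mem_span_three]
  constructor
  · rintro ⟨h0, h1⟩ y
    simp [gBr_apply, *]
  · intro h
    have hb0 := h (e 0)
    have hb1 := h (e 1)
    simp [gBr_apply, e] at hb0 hb1
    simp_all

/-- `span {e 4, ..., e 7}` is the derived subalgebra of `g_a`. -/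
lemma span_brackets {a : ℝ} (ha : 0 < a) :
    Submodule.span ℝ {z | ∃ x y, z = gBr a x y} = Submodule.span ℝ {e 4, e 5, e 6, e 7} := by
  have ha' : 1 + a ≠ 0 := by positivity
  apply le_antisymm
  · rw [Submodule.span_le]
    rintro _ ⟨x, y, rfl⟩
    rw [SetLike.mem_coe, mem_span_four, gBr_apply]
    simp
  · rw [Submodule.span_le]
    -- The generators are `e 4 = [e 1, e 0]`, `e 5 = [e 4, e 0]`, `e 6 = [e 1, e 2]`
    -- and `e 7 = [e 5, e 0]`.
    have key : ∀ i j k, e k = gBr a (e i) (e j) →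
        e k ∈ Submodule.span ℝ {z | ∃ x y, z = gBr a x y} :=
      fun i j k h => Submodule.subset_span ⟨_, _, h⟩
    rintro _ (rfl | rfl | rfl | rfl)
    · refine key 1 0 4 ?_
      funext k; rw [gBr_apply]; fin_cases k <;> simp [e]
    · refine key 4 0 5 ?_
      funext k; rw [gBr_apply]; fin_cases k <;> simp [e]
    · refine key 1 2 6 ?_
      funext k; rw [gBr_apply]; fin_cases k <;> simp [e]
    · refine key 5 0 7 ?_
      funext k; rw [gBr_apply]; fin_cases k <;> simp [e]

lemma map_eq_self_of_mem_iff (f : (Fin 8 → ℝ) ≃ₗ[ℝ] (Fin 8 → ℝ)) (S : Submodule ℝ (Fin 8 → ℝ))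
    (h : ∀ x, x ∈ S ↔ f x ∈ S) :
    Submodule.map (f : (Fin 8 → ℝ) →ₗ[ℝ] (Fin 8 → ℝ)) S = S := by
  ext y
  obtain ⟨x, rfl⟩ := f.surjective y
  rw [← h x]
  simp

/-- any Lie algebra isomorphism `f : g_alpha → g_alpha'` preserves the terms of
the ascending central series and the derived subalgebra (expressed in the distinguished
bases, which coincide under the identification of the underlying vector spaces). -/
theorem statement4 (α α' : ℚ) (hα : 0 < α) (hα' : 0 < α')
    (f : (Fin 8 → ℝ) ≃ₗ[ℝ] (Fin 8 → ℝ))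
    (hf : ∀ x y : Fin 8 → ℝ, f (gBr (α : ℝ) x y) = gBr (α' : ℝ) (f x) (f y)) :
    Submodule.map (f : (Fin 8 → ℝ) →ₗ[ℝ] (Fin 8 → ℝ)) (Submodule.span ℝ {e 7})
      = Submodule.span ℝ {e 7} ∧
    Submodule.map (f : (Fin 8 → ℝ) →ₗ[ℝ] (Fin 8 → ℝ)) (Submodule.span ℝ {e 5, e 6, e 7})
      = Submodule.span ℝ {e 5, e 6, e 7} ∧
    Submodule.map (f : (Fin 8 → ℝ) →ₗ[ℝ] (Fin 8 → ℝ))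
        (Submodule.span ℝ {e 2, e 3, e 4, e 5, e 6, e 7})
      = Submodule.span ℝ {e 2, e 3, e 4, e 5, e 6, e 7} ∧
    Submodule.map (f : (Fin 8 → ℝ) →ₗ[ℝ] (Fin 8 → ℝ)) (Submodule.span ℝ {e 4, e 5, e 6, e 7})
      = Submodule.span ℝ {e 4, e 5, e 6, e 7} := by
  have ha : (0 : ℝ) < α := by exact_mod_cast hα
  have ha' : (0 : ℝ) < α' := by exact_mod_cast hα'
  have h1 : ∀ x, x ∈ Submodule.span ℝ {e 7} ↔ f x ∈ Submodule.span ℝ {e 7} := by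
    intro x
    rw [mem_center_iff ha, mem_center_iff ha']
    refine Iff.trans ?_ f.surjective.forall.symm
    simp only [← hf, map_eq_zero_iff f f.injective]
  have h2 : ∀ x, x ∈ Submodule.span ℝ {e 5, e 6, e 7} ↔
      f x ∈ Submodule.span ℝ {e 5, e 6, e 7} := by
    intro x
    rw [mem_center_two_iff ha, mem_center_two_iff ha']
    refine Iff.trans ?_ f.surjective.forall.symm
    simp only [← hf, ← h1]
  have h3 : ∀ x, x ∈ Submodule.span ℝ {e 2, e 3, e 4, e 5, e 6, e 7} ↔
      f x ∈ Submodule.span ℝ {e 2, e 3, e 4, e 5, e 6, e 7} := by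
    intro x
    rw [mem_center_three_iff α, mem_center_three_iff α']
    refine Iff.trans ?_ f.surjective.forall.symm
    simp only [← hf, ← h2]
  refine ⟨map_eq_self_of_mem_iff f _ h1, map_eq_self_of_mem_iff f _ h2,
    map_eq_self_of_mem_iff f _ h3, ?_⟩
  conv_lhs => rw [← span_brackets ha]
  rw [← span_brackets ha', Submodule.map_span]
  congr 1
  ext z
  constructor
  · rintro ⟨_, ⟨x, y, rfl⟩, rfl⟩
    exact ⟨f x, f y, hf x y⟩
  · rintro ⟨x, y, rfl⟩
    refine ⟨gBr α (f.symm x) (f.symm y), ⟨_, _, rfl⟩, ?_⟩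
    simp [hf]
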